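/- For any (possibly degenerate) triangle with side lengths a, b, c, area S and isoperimetric deficit Q, one has (a+b+c)² ≤ 8Q + 12√3·S; moreover this inequality is equivalent to the reverse Finsler–Hadwiger inequality a² + b² + c² ≤ 3Q + 4√3·S. -/

import Mathlib

/-!
In Ravi coordinates `a = y + z`, `b = z + x`, `c = x + y`, with `p = x + y + z`,
`q = x * y + y * z + z * x` and `r = x * y * z`, one has `S ^ 2 = p * r` and
`a ^ 2 + b ^ 2 + c ^ 2 - 3 * Q = 4 * T`, where `T = 4 * q - p ^ 2`. The reverse
Finsler–Hadwiger inequality becomes `T ≤ √(3 * p * r)`. It is trivial when `T ≤ 0`; otherwise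
`3 * q ≤ p ^ 2` gives `3 * T ≤ p ^ 2`, Schur's inequality reads `p * T ≤ 9 * r`, and together
`3 * T ^ 2 ≤ p ^ 2 * T ≤ 9 * p * r`.
-/

theorem schur_inequality_of_le {R : Type*} [CommRing R] [PartialOrder R] [IsOrderedRing R]
    (n : ℕ) {x y z : R} (hz : 0 ≤ z) (hzy : z ≤ y) (hyx : y ≤ x) :
    0 ≤ x ^ n * (x - y) * (x - z) + y ^ n * (y - z) * (y - x) + z ^ n * (z - x) * (z - y) := by
  have hy : 0 ≤ y := hz.trans hzy
  have hxz : 0 ≤ x - z := sub_nonneg.2 (hzy.trans hyx)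
  have hyz : 0 ≤ y - z := sub_nonneg.2 hzy
  have h_weighted : 0 ≤ x ^ n * (x - z) - y ^ n * (y - z) := by
    rw [sub_nonneg]
    gcongr
    exact pow_nonneg (hy.trans hyx) n
  calc
    0 ≤ (x - y) * (x ^ n * (x - z) - y ^ n * (y - z)) + z ^ n * ((x - z) * (y - z)) :=
      add_nonneg (mul_nonneg (sub_nonneg.2 hyx) h_weighted)
        (mul_nonneg (pow_nonneg hz n) (mul_nonneg hxz hyz))
    _ = _ := by ring

section LinearOrderedRing

variable {R : Type*} [CommRing R] [LinearOrder R]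

theorem schur_inequality [IsOrderedRing R] (n : ℕ) {x y z : R}
    (hx : 0 ≤ x) (hy : 0 ≤ y) (hz : 0 ≤ z) :
    0 ≤ x ^ n * (x - y) * (x - z) + y ^ n * (y - z) * (y - x) + z ^ n * (z - x) * (z - y) := by
  wlog hyx : y ≤ x generalizing x y
  · convert this hy hx (le_of_not_ge hyx) using 1
    ring
  rcases le_total z y with hzy | hyz
  · exact schur_inequality_of_le n hz hzy hyx
  rcases le_total z x with hzx | hxz
  · convert schur_inequality_of_le n hy hyz hzx using 1
    ring
  · convert schur_inequality_of_le n hy hyx hxz using 1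
    ring

variable [IsStrictOrderedRing R]

theorem three_mul_sum_mul_le_sq_sum (x y z : R) :
    3 * (x * y + y * z + z * x) ≤ (x + y + z) ^ 2 := by
  linarith [sq_nonneg (x - y), sq_nonneg (y - z), sq_nonneg (z - x)]

theorem sum_mul_four_mul_sub_sq_le {x y z : R} (hx : 0 ≤ x) (hy : 0 ≤ y) (hz : 0 ≤ z) :
    (x + y + z) * (4 * (x * y + y * z + z * x) - (x + y + z) ^ 2) ≤ 9 * (x * y * z) := by
  linarith [schur_inequality 1 hx hy hz]

theorem sq_four_mul_sub_sq_le {x y z : R} (hx : 0 ≤ x) (hy : 0 ≤ y) (hz : 0 ≤ z)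
    (hT : 0 ≤ 4 * (x * y + y * z + z * x) - (x + y + z) ^ 2) :
    (4 * (x * y + y * z + z * x) - (x + y + z) ^ 2) ^ 2 ≤
      3 * ((x + y + z) * (x * y * z)) := by
  have h_schur := sum_mul_four_mul_sub_sq_le hx hy hz
  have h_sq := three_mul_sum_mul_le_sq_sum x y z
  set p := x + y + z
  set T := 4 * (x * y + y * z + z * x) - p ^ 2
  have hp : 0 ≤ p := add_nonneg (add_nonneg hx hy) hz
  have hTp : 3 * T ≤ p ^ 2 := by linarith
  suffices 3 * T ^ 2 ≤ 9 * (p * (x * y * z)) by linarith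
  calc
    3 * T ^ 2 = 3 * T * T := by ring
    _ ≤ p ^ 2 * T := mul_le_mul_of_nonneg_right hTp hT
    _ = p * (p * T) := by ring
    _ ≤ p * (9 * (x * y * z)) := mul_le_mul_of_nonneg_left h_schur hp
    _ = 9 * (p * (x * y * z)) := by ring

theorem sq_sum_le_iff_sum_sq_le (a b c k : R) :
    (a + b + c) ^ 2 ≤ 8 * ((a - b) ^ 2 + (b - c) ^ 2 + (c - a) ^ 2) + 3 * k ↔
      a ^ 2 + b ^ 2 + c ^ 2 ≤ 3 * ((a - b) ^ 2 + (b - c) ^ 2 + (c - a) ^ 2) + k := by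
  rw [show (a + b + c) ^ 2 =
    3 * (a ^ 2 + b ^ 2 + c ^ 2) - ((a - b) ^ 2 + (b - c) ^ 2 + (c - a) ^ 2) by ring]
  constructor <;> intro h <;> linarith

end LinearOrderedRing

theorem four_mul_sub_sq_le_sqrt {x y z : ℝ} (hx : 0 ≤ x) (hy : 0 ≤ y) (hz : 0 ≤ z) :
    4 * (x * y + y * z + z * x) - (x + y + z) ^ 2 ≤
      √(3 * ((x + y + z) * (x * y * z))) := by
  rcases le_total (4 * (x * y + y * z + z * x) - (x + y + z) ^ 2) 0 with hT | hT
  · exact hT.trans (Real.sqrt_nonneg _)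
  · exact Real.le_sqrt_of_sq_le (sq_four_mul_sub_sq_le hx hy hz hT)

theorem reverse_finsler_hadwiger {a b c S : ℝ}
    (hab : a ≤ b + c) (hbc : b ≤ c + a) (hca : c ≤ a + b) (hS : 0 ≤ S)
    (heron : 16 * S ^ 2 = (a + b + c) * (-a + b + c) * (a - b + c) * (a + b - c)) :
    a ^ 2 + b ^ 2 + c ^ 2 ≤
      3 * ((a - b) ^ 2 + (b - c) ^ 2 + (c - a) ^ 2) + 4 * √3 * S := by
  obtain ⟨x, y, z, rfl, rfl, rfl⟩ : ∃ x y z, a = y + z ∧ b = z + x ∧ c = x + y :=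
    ⟨(-a + b + c) / 2, (a - b + c) / 2, (a + b - c) / 2, by ring, by ring, by ring⟩
  have h_area : S ^ 2 = (x + y + z) * (x * y * z) := by linear_combination heron / 16
  have h_sqrt : √(3 * ((x + y + z) * (x * y * z))) = √3 * S := by
    rw [← h_area, Real.sqrt_mul zero_le_three, Real.sqrt_sq hS]
  have h_ravi := four_mul_sub_sq_le_sqrt
    (by linarith : 0 ≤ x) (by linarith : 0 ≤ y) (by linarith : 0 ≤ z)
  rw [h_sqrt] at h_ravi
  linarith

/-- For any (possibly degenerate) triangle, `(a+b+c)² ≤ 8Q + 12√3·S`, and this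
inequality is equivalent to the reverse Finsler–Hadwiger inequality
`a² + b² + c² ≤ 3Q + 4√3·S`, where `Q = (a−b)² + (b−c)² + (c−a)²`. -/
theorem perimeter_reverse_finsler_hadwiger (a b c S Q : ℝ)
    (ha : 0 ≤ a) (hb : 0 ≤ b) (hc : 0 ≤ c)
    (hab : a ≤ b + c) (hbc : b ≤ c + a) (hca : c ≤ a + b)
    (hS : 0 ≤ S)
    (heron : 16 * S ^ 2 = (a + b + c) * (-a + b + c) * (a - b + c) * (a + b - c))
    (hQ : Q = (a - b) ^ 2 + (b - c) ^ 2 + (c - a) ^ 2) :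
    (a + b + c) ^ 2 ≤ 8 * Q + 12 * Real.sqrt 3 * S ∧
      ((a + b + c) ^ 2 ≤ 8 * Q + 12 * Real.sqrt 3 * S ↔
        a ^ 2 + b ^ 2 + c ^ 2 ≤ 3 * Q + 4 * Real.sqrt 3 * S) := by
  subst hQ
  have h_equiv := sq_sum_le_iff_sum_sq_le a b c (4 * √3 * S)
  rw [show 3 * (4 * √3 * S) = 12 * √3 * S by ring] at h_equiv
  exact ⟨h_equiv.2 (reverse_finsler_hadwiger hab hbc hca hS heron), h_equiv⟩
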